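/- arXiv:cs/0612064 — 4 statements merged into one kernel-verified Lean document; each statement's English description precedes it below -/
import Mathlib

section
/- The key appearance equivocation is bounded on both sides in terms of the total probability of messages with nontrivial stabilizer: log(2) · Σ_{m^L : St(m^L) ≠ {id}} P(m^L) ≤ H(K | M^L C^L) ≤ log(|K|) · Σ_{m^L : St(m^L) ≠ {id}} P(m^L). -/
open scoped Classical

noncomputable section

/-- Probability of a word under the i.i.d. extension of the symbol distribution `P`. -/
def wordP {M : Type*} (P : M → ℝ) {L : ℕ} (m : Fin L → M) : ℝ := ∏ l, P (m l)

/-- Number of keys in `K` mapping the message `m` (letterwise) to the cryptogram `c`. -/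
def keyCount {M : Type*} (K : Subgroup (Equiv.Perm M)) {L : ℕ} (m c : Fin L → M) : ℕ :=
  Nat.card {k : Equiv.Perm M // k ∈ K ∧ ∀ l, k (m l) = c l}

/-- The key appearance equivocation `H(K | M^L C^L)` for the substitution cipher with
key space `K` (keys uniform), symbol distribution `P` and message length `L`. -/
def kae {M : Type*} [Fintype M] (K : Subgroup (Equiv.Perm M)) (P : M → ℝ) (L : ℕ) : ℝ :=
  ∑ m : Fin L → M, ∑ c : Fin L → M,
    wordP P m * (keyCount K m c : ℝ) / (Nat.card K : ℝ) * Real.log (keyCount K m c)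

/-- The fixed set `F(π)` of a permutation. -/
def fixedSet {M : Type*} [Fintype M] [DecidableEq M] (π : Equiv.Perm M) : Finset M :=
  Finset.univ.filter fun j => π j = j

/-- `P_π`: total probability of the fixed set of `π`. -/
def Pfix {M : Type*} [Fintype M] [DecidableEq M] (P : M → ℝ) (π : Equiv.Perm M) : ℝ :=
  ∑ j ∈ fixedSet π, P j

/-- A key is maximal if it is a non-identity element of `K` whose fixed set is maximal
under inclusion among fixed sets of non-identity elements of `K`. -/
def IsMaximalKey {M : Type*} [Fintype M] [DecidableEq M] (K : Subgroup (Equiv.Perm M))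
    (π : Equiv.Perm M) : Prop :=
  π ∈ K ∧ π ≠ 1 ∧ ∀ τ ∈ K, τ ≠ 1 → fixedSet π ⊆ fixedSet τ → fixedSet τ = fixedSet π

/-- The stabilizer of the message `m` in `K` is nontrivial. -/
def hasNontrivialStab {M : Type*} (K : Subgroup (Equiv.Perm M)) {L : ℕ} (m : Fin L → M) : Prop :=
  ∃ k ∈ K, k ≠ 1 ∧ ∀ l, k (m l) = m l

/-- Total probability of length-`L` messages with a nontrivial stabilizer in `K`. -/
def probNontrivial {M : Type*} [Fintype M] (K : Subgroup (Equiv.Perm M)) (P : M → ℝ)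
    (L : ℕ) : ℝ :=
  ∑ m : Fin L → M, if hasNontrivialStab K m then wordP P m else 0

/-!
The keys taking a message `x` to a cryptogram `y` form either the empty set or a left coset of the
stabilizer of `x`. Given `x`, every cryptogram that occurs therefore leaves `log |St x|` of
uncertainty about the key, so the equivocation is the mean of `log |St x|`. This vanishes when the
stabilizer is trivial and otherwise lies between `log 2` and `log |K|`.
-/

open MulAction

section SMul

variable (G : Type*) {X : Type*} [SMul G X]

/-- The set of elements of `G` that carry `x` to `y`: the keys compatible with the message `x` and
the cryptogram `y` in the cipher that encrypts `x` under the key `g` as `g • x`. -/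
def transporter (x y : X) : Set G := {g | g • x = y}

/-- The key appearance equivocation of the cipher that encrypts `x` under the key `g` as `g • x`,
for a uniformly distributed key `g`; `w x` is the probability of the message `x`. -/
def appearanceEquivocation [Fintype X] (w : X → ℝ) : ℝ :=
  ∑ x, ∑ y,
    w x * Nat.card (transporter G x y) / Nat.card G * Real.log (Nat.card (transporter G x y))

variable {G}

theorem sum_card_transporter [Finite G] [Fintype X] (x : X) :
    ∑ y, Nat.card (transporter G x y) = Nat.card G := by
  rw [← Nat.card_sigma]
  exact Nat.card_congr (Equiv.sigmaFiberEquiv fun g : G => g • x)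

end SMul

section MulAction

variable {G X : Type*} [Group G] [MulAction G X]

theorem card_transporter_of_nonempty {x y : X} (h : (transporter G x y).Nonempty) :
    Nat.card (transporter G x y) = Nat.card (stabilizer G x) := by
  obtain ⟨g, rfl⟩ := h
  refine (Nat.card_congr ((Equiv.mulLeft g).subtypeEquiv fun s => ?_)).symm
  change s • x = x ↔ (g * s) • x = g • x
  rw [mul_smul, smul_left_cancel_iff]

theorem card_transporter_mul_log (x y : X) :
    (Nat.card (transporter G x y) : ℝ) * Real.log (Nat.card (transporter G x y)) =
      Nat.card (transporter G x y) * Real.log (Nat.card (stabilizer G x)) := by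
  rcases (transporter G x y).eq_empty_or_nonempty with hempty | hne
  · simp [hempty]
  · rw [card_transporter_of_nonempty hne]

theorem appearanceEquivocation_eq_sum_log_card_stabilizer [Finite G] [Fintype X] (w : X → ℝ) :
    appearanceEquivocation G w = ∑ x, w x * Real.log (Nat.card (stabilizer G x)) := by
  refine Finset.sum_congr rfl fun x _ => ?_
  have card_ne_zero : (Nat.card G : ℝ) ≠ 0 := Nat.cast_ne_zero.mpr Nat.card_pos.ne'
  calc
    _ = ∑ y, w x / Nat.card G *
          ((Nat.card (transporter G x y) : ℝ) * Real.log (Nat.card (transporter G x y))) :=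
      Finset.sum_congr rfl fun y _ => by ring
    _ = w x / Nat.card G *
          ((∑ y, Nat.card (transporter G x y) : ℕ) * Real.log (Nat.card (stabilizer G x))) := by
      simp only [card_transporter_mul_log, ← Finset.mul_sum, ← Finset.sum_mul, Nat.cast_sum]
    _ = w x * Real.log (Nat.card (stabilizer G x)) := by
      rw [sum_card_transporter]
      field_simp

theorem appearanceEquivocation_eq_sum_nontrivial_stabilizer [Finite G] [Fintype X] (w : X → ℝ) :
    appearanceEquivocation G w =
      ∑ x with stabilizer G x ≠ ⊥, w x * Real.log (Nat.card (stabilizer G x)) := by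
  rw [appearanceEquivocation_eq_sum_log_card_stabilizer]
  symm
  apply Finset.sum_filter_of_ne
  rintro x - hx hbot
  apply hx
  rw [hbot, Subgroup.card_bot, Nat.cast_one, Real.log_one, mul_zero]

theorem kae_bounds_probNontrivial_general [Finite G] [Fintype X] {w : X → ℝ}
    (hw : ∀ x, 0 ≤ w x) :
    Real.log 2 * ∑ x with stabilizer G x ≠ ⊥, w x ≤ appearanceEquivocation G w ∧
      appearanceEquivocation G w ≤
        Real.log (Nat.card G) * ∑ x with stabilizer G x ≠ ⊥, w x := by
  simp only [appearanceEquivocation_eq_sum_nontrivial_stabilizer, Finset.mul_sum,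
    mul_comm (Real.log _) (w _)]
  constructor <;> refine Finset.sum_le_sum fun x hx => mul_le_mul_of_nonneg_left ?_ (hw x)
  · have two_le_card : 2 ≤ Nat.card (stabilizer G x) :=
      (Subgroup.one_lt_card_iff_ne_bot _).mpr (Finset.mem_filter.mp hx).2
    exact Real.log_le_log two_pos (mod_cast two_le_card)
  · exact Real.log_le_log (mod_cast Nat.card_pos) (mod_cast Subgroup.card_le_card_group _)

end MulAction

section SubstitutionCipher

variable {M : Type*} (K : Subgroup (Equiv.Perm M)) {L : ℕ}

theorem keyCount_eq_card_transporter (m c : Fin L → M) :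
    keyCount K m c = Nat.card (transporter K m c) := by
  refine Nat.card_congr ((Equiv.subtypeSubtypeEquivSubtypeInter _ _).symm.trans
    (Equiv.subtypeEquivRight fun k => ?_))
  exact funext_iff.symm

theorem hasNontrivialStab_iff_stabilizer_ne_bot (m : Fin L → M) :
    hasNontrivialStab K m ↔ stabilizer K m ≠ ⊥ := by
  rw [Subgroup.ne_bot_iff_exists_ne_one]
  constructor
  · rintro ⟨k, hk, hk_ne, hfix⟩
    exact ⟨⟨⟨k, hk⟩, funext hfix⟩, fun h => hk_ne (congrArg (fun s => (s.1 : Equiv.Perm M)) h)⟩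
  · rintro ⟨⟨⟨k, hk⟩, hfix⟩, hk_ne⟩
    exact ⟨k, hk, fun h => hk_ne (Subtype.ext (Subtype.ext h)), congrFun hfix⟩

theorem kae_eq_appearanceEquivocation [Fintype M] (P : M → ℝ) (L : ℕ) :
    kae K P L = appearanceEquivocation K (wordP P (L := L)) := by
  simp only [kae, appearanceEquivocation, keyCount_eq_card_transporter]

theorem probNontrivial_eq_sum_nontrivial_stabilizer [Fintype M] (P : M → ℝ) (L : ℕ) :
    probNontrivial K P L = ∑ m : Fin L → M with stabilizer K m ≠ ⊥, wordP P m := by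
  simp only [probNontrivial, hasNontrivialStab_iff_stabilizer_ne_bot, Finset.sum_filter]

theorem wordP_nonneg {P : M → ℝ} (hP : ∀ x, 0 ≤ P x) (m : Fin L → M) : 0 ≤ wordP P m :=
  Finset.prod_nonneg fun l _ => hP (m l)

end SubstitutionCipher

/-- `log 2 · Σ_{m : St(m) ≠ {id}} P(m) ≤ H(K | M^L C^L) ≤ log|K| · Σ_{m : St(m) ≠ {id}} P(m)`. -/
theorem kae_bounds_probNontrivial {M : Type*} [Fintype M] [DecidableEq M]
    (K : Subgroup (Equiv.Perm M)) (P : M → ℝ)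
    (hP : ∀ x, 0 ≤ P x) (hsum : ∑ x, P x = 1) (L : ℕ) :
    Real.log 2 * probNontrivial K P L ≤ kae K P L ∧
      kae K P L ≤ Real.log (Nat.card K) * probNontrivial K P L := by
  rw [kae_eq_appearanceEquivocation, probNontrivial_eq_sum_nontrivial_stabilizer]
  exact kae_bounds_probNontrivial_general (wordP_nonneg hP)
end
end

section
/- The total probability of messages with nontrivial stabilizer is bounded above via the maximal keys: Σ_{m^L : St(m^L) ≠ {id}} P(m^L) ≤ Σ_{τ ∈ K_max} (P_τ)^L ≤ |K_max| · R^L, where R = max{P_τ : τ ∈ K_max} (assuming K_max is nonempty). -/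
open scoped Classical

noncomputable section

/-!
A word fixed by a non-identity key is fixed by a maximal key, because each of the finitely many
fixed sets of non-identity keys lies in a maximal one. Hence the words with nontrivial stabilizer
are the union, over the maximal keys `τ`, of the words written in `F(τ)`. The latter have total
weight `(P_τ) ^ L`, and the union bound concludes.
-/

section UnionBound

variable {ι α κ N : Type*}

theorem sum_biUnion_le_sum_sum [DecidableEq α] [AddCommMonoid N] [PartialOrder N]
    [IsOrderedAddMonoid N] (s : Finset κ) (t : κ → Finset α) {f : α → N}
    (hf : ∀ a ∈ s.biUnion t, 0 ≤ f a) :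
    ∑ a ∈ s.biUnion t, f a ≤ ∑ i ∈ s, ∑ a ∈ t i, f a := by
  have biUnion_eq_image : s.biUnion t = (s.sigma t).image Sigma.snd := by
    ext a
    simp
  rw [biUnion_eq_image] at hf ⊢
  rw [Finset.sum_sigma']
  exact Finset.sum_image_le_of_nonneg hf

theorem sum_biUnion_piFinset_prod_le [Fintype ι] [DecidableEq ι] [DecidableEq α]
    [CommSemiring N] [PartialOrder N] [IsOrderedRing N]
    (s : Finset κ) (t : κ → Finset α) {w : α → N} (hw : ∀ a, 0 ≤ w a) :
    ∑ m ∈ s.biUnion fun i => Fintype.piFinset fun _ : ι => t i, ∏ l, w (m l) ≤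
      ∑ i ∈ s, (∑ a ∈ t i, w a) ^ Fintype.card ι :=
  calc
    _ ≤ ∑ i ∈ s, ∑ m ∈ Fintype.piFinset fun _ : ι => t i, ∏ l, w (m l) :=
      sum_biUnion_le_sum_sum _ _ fun m _ => Finset.prod_nonneg fun l _ => hw (m l)
    _ = ∑ i ∈ s, (∑ a ∈ t i, w a) ^ Fintype.card ι := by
      simp only [Finset.sum_prod_piFinset, Finset.prod_const, Finset.card_univ]

end UnionBound

section MaximalKeys

variable {M : Type*} [Fintype M] [DecidableEq M] {K : Subgroup (Equiv.Perm M)}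
  {P : M → ℝ} {L : ℕ}

theorem mem_fixedSet {π : Equiv.Perm M} {j : M} : j ∈ fixedSet π ↔ π j = j := by
  simp [fixedSet]

theorem Pfix_nonneg (hP : ∀ x, 0 ≤ P x) (π : Equiv.Perm M) : 0 ≤ Pfix P π :=
  Finset.sum_nonneg fun j _ => hP j

theorem exists_isMaximalKey_fixedSet_subset {π : Equiv.Perm M} (hπ : π ∈ K) (hπ_ne : π ≠ 1) :
    ∃ τ, IsMaximalKey K τ ∧ fixedSet π ⊆ fixedSet τ := by
  let IsNontrivialFixedSet (F : Finset M) : Prop := ∃ σ ∈ K, σ ≠ 1 ∧ fixedSet σ = F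
  obtain ⟨_, hsub, ⟨τ, hτ, hτ_ne, rfl⟩, hτ_max⟩ :=
    Finite.exists_le_maximal (p := IsNontrivialFixedSet) ⟨π, hπ, hπ_ne, rfl⟩
  exact ⟨τ, ⟨hτ, hτ_ne, fun σ hσ hσ_ne hτσ =>
    (hτ_max ⟨σ, hσ, hσ_ne, rfl⟩ hτσ).antisymm hτσ⟩, hsub⟩

theorem hasNontrivialStab_iff_exists_isMaximalKey {m : Fin L → M} :
    hasNontrivialStab K m ↔ ∃ τ, IsMaximalKey K τ ∧ ∀ l, m l ∈ fixedSet τ := by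
  constructor
  · rintro ⟨π, hπ, hπ_ne, hπm⟩
    obtain ⟨τ, hτ, hsub⟩ := exists_isMaximalKey_fixedSet_subset hπ hπ_ne
    exact ⟨τ, hτ, fun l => hsub (mem_fixedSet.2 (hπm l))⟩
  · rintro ⟨τ, ⟨hτ, hτ_ne, -⟩, hτm⟩
    exact ⟨τ, hτ, hτ_ne, fun l => mem_fixedSet.1 (hτm l)⟩

theorem filter_hasNontrivialStab_eq_biUnion :
    Finset.univ.filter (fun m : Fin L → M => hasNontrivialStab K m) =
      (Finset.univ.filter (IsMaximalKey K)).biUnion fun τ =>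
        Fintype.piFinset fun _ => fixedSet τ := by
  ext m
  simp [hasNontrivialStab_iff_exists_isMaximalKey]

theorem probNontrivial_le_sum_Pfix_pow (hP : ∀ x, 0 ≤ P x) :
    probNontrivial K P L ≤ ∑ τ ∈ Finset.univ.filter (IsMaximalKey K), Pfix P τ ^ L := by
  rw [probNontrivial, ← Finset.sum_filter, filter_hasNontrivialStab_eq_biUnion]
  simpa only [Fintype.card_fin, wordP, Pfix] using
    sum_biUnion_piFinset_prod_le (ι := Fin L) _ fixedSet hP

theorem sum_Pfix_pow_le_card_mul_pow (hP : ∀ x, 0 ≤ P x) {S : Finset (Equiv.Perm M)} {R : ℝ}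
    (hR : ∀ τ ∈ S, Pfix P τ ≤ R) : ∑ τ ∈ S, Pfix P τ ^ L ≤ S.card * R ^ L := by
  rw [← nsmul_eq_mul]
  exact Finset.sum_le_card_nsmul _ _ _ fun τ hτ =>
    pow_le_pow_left₀ (Pfix_nonneg hP τ) (hR τ hτ) L

end MaximalKeys

/-- `Σ_{m : St(m) ≠ {id}} P(m) ≤ Σ_{τ ∈ K_max} (P_τ)^L ≤ |K_max| · R^L`. -/
theorem probNontrivial_le_sum_maximal {M : Type*} [Fintype M] [DecidableEq M]
    (K : Subgroup (Equiv.Perm M)) (P : M → ℝ)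
    (hP : ∀ x, 0 ≤ P x) (hsum : ∑ x, P x = 1) (L : ℕ) (R : ℝ)
    (hmax : ∀ τ, IsMaximalKey K τ → Pfix P τ ≤ R)
    (hex : ∃ τ, IsMaximalKey K τ ∧ Pfix P τ = R) :
    probNontrivial K P L ≤
        (∑ τ ∈ Finset.univ.filter (IsMaximalKey K), (Pfix P τ) ^ L) ∧
      (∑ τ ∈ Finset.univ.filter (IsMaximalKey K), (Pfix P τ) ^ L) ≤
        (Finset.univ.filter (IsMaximalKey K)).card * R ^ L :=
  ⟨probNontrivial_le_sum_Pfix_pow hP,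
    sum_Pfix_pow_le_card_mul_pow hP fun τ hτ => hmax τ (Finset.mem_filter.1 hτ).2⟩
end
end

section
/- Let M be a finite set with |M| = N ≥ 2, let P_M be a probability distribution on M, and let the key space be K = Sym(M). Then the maximum of P_π = Σ_{j ∈ F(π)} P_M(j) over the maximal keys π ∈ K_max equals 1 minus the sum of the two smallest symbol probabilities: max{P_π : π ∈ K_max} = 1 − min_{i ≠ j} (P_M(i) + P_M(j)). In particular, if P_M(1) ≥ P_M(2) ≥ … ≥ P_M(N), this maximum equals 1 − P_M(N) − P_M(N−1) = Σ_{j=1}^{N−2} P_M(j). -/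
open scoped Classical

noncomputable section

/-!
Fixing more points means moving fewer. A permutation moving `a` moves the two points `a` and `π a`,
which are exactly the points moved by the transposition `(a π(a))`; hence the maximal keys of
`Sym(M)` are the transpositions. The transposition `(i j)` has `P_π = ∑ P - (P i + P j)`, so
maximizing `P_π` amounts to minimizing `P i + P j`.
-/

open Equiv

section

variable {M : Type*} [Fintype M] [DecidableEq M]

theorem fixedSet_eq_compl_support (π : Perm M) : fixedSet π = π.supportᶜ := by
  ext x
  simp [fixedSet]

theorem isMaximalKey_iff_support {K : Subgroup (Perm M)} {π : Perm M} :
    IsMaximalKey K π ↔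
      π ∈ K ∧ π ≠ 1 ∧ ∀ τ ∈ K, τ ≠ 1 → τ.support ⊆ π.support → τ.support = π.support := by
  simp only [IsMaximalKey, fixedSet_eq_compl_support, Finset.compl_subset_compl, compl_inj_iff]

theorem isMaximalKey_top_iff_isSwap {π : Perm M} :
    IsMaximalKey (⊤ : Subgroup (Perm M)) π ↔ π.IsSwap := by
  rw [isMaximalKey_iff_support]
  constructor
  · rintro ⟨-, hπ, hmax⟩
    obtain ⟨a, ha⟩ : ∃ a, a ≠ π a := by
      simpa [Perm.ext_iff, eq_comm] using hπ
    have hsub : (swap a (π a)).support ⊆ π.support := by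
      simp [Perm.support_swap ha, Finset.insert_subset_iff, ha.symm]
    have hsupport : (swap a (π a)).support = π.support :=
      hmax _ (Subgroup.mem_top _) (by simpa using ha) hsub
    rw [← Perm.card_support_eq_two, ← hsupport, Perm.card_support_swap ha]
  · intro hπ
    have hcard : π.support.card = 2 := Perm.card_support_eq_two.mpr hπ
    refine ⟨Subgroup.mem_top _, ?_, fun τ _ hτ hsub => ?_⟩
    · rintro rfl
      simp at hcard
    · exact Finset.eq_of_subset_of_card_le hsub
        (hcard.trans_le (Perm.two_le_card_support_of_ne_one hτ))

theorem Pfix_eq_sum_sub_sum_support (P : M → ℝ) (π : Perm M) :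
    Pfix P π = ∑ x, P x - ∑ x ∈ π.support, P x := by
  rw [Pfix, fixedSet_eq_compl_support, eq_sub_iff_add_eq, Finset.sum_compl_add_sum]

theorem Pfix_swap (P : M → ℝ) {i j : M} (hij : i ≠ j) :
    Pfix P (swap i j) = ∑ x, P x - (P i + P j) := by
  rw [Pfix_eq_sum_sub_sum_support, Perm.support_swap hij, Finset.sum_pair hij]

theorem setOf_Pfix_maximalKey_top_eq_image (P : M → ℝ) :
    {x : ℝ | ∃ π : Perm M, IsMaximalKey (⊤ : Subgroup (Perm M)) π ∧ Pfix P π = x} =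
      (∑ x, P x - ·) '' {y : ℝ | ∃ i j : M, i ≠ j ∧ P i + P j = y} := by
  ext x
  simp only [isMaximalKey_top_iff_isSwap, Set.mem_ofPred_eq, Set.mem_image]
  constructor
  · rintro ⟨_, ⟨i, j, hij, rfl⟩, rfl⟩
    exact ⟨_, ⟨i, j, hij, rfl⟩, (Pfix_swap P hij).symm⟩
  · rintro ⟨_, ⟨i, j, hij, rfl⟩, rfl⟩
    exact ⟨_, ⟨i, j, hij, rfl⟩, Pfix_swap P hij⟩

end

theorem exists_isLeast_pair_sums {M α : Type*} [Finite M] [Nontrivial M] [LinearOrder α] [Add α]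
    (P : M → α) : ∃ c, IsLeast {y : α | ∃ i j : M, i ≠ j ∧ P i + P j = y} c := by
  obtain ⟨i, j, hij⟩ := exists_pair_ne M
  obtain ⟨⟨a, b⟩, hab, hmin⟩ := Set.exists_min_image {p : M × M | p.1 ≠ p.2}
    (fun p => P p.1 + P p.2) (Set.toFinite _) ⟨(i, j), hij⟩
  refine ⟨P a + P b, ⟨a, b, hab, rfl⟩, ?_⟩
  rintro _ ⟨k, l, hkl, rfl⟩
  exact hmin (k, l) hkl

theorem max_Pfix_symmetric_group_general {M : Type*} [Fintype M] [DecidableEq M] [Nontrivial M]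
    (P : M → ℝ) :
    ∃ c : ℝ, IsLeast {y : ℝ | ∃ i j : M, i ≠ j ∧ P i + P j = y} c ∧
      IsGreatest {x : ℝ | ∃ π : Perm M,
        IsMaximalKey (⊤ : Subgroup (Perm M)) π ∧ Pfix P π = x} (∑ x, P x - c) := by
  obtain ⟨c, hc⟩ := exists_isLeast_pair_sums P
  refine ⟨c, hc, ?_⟩
  rw [setOf_Pfix_maximalKey_top_eq_image]
  have hanti : Antitone (∑ x, P x - ·) := fun _ _ h => sub_le_sub_left h _
  exact hanti.map_isLeast hc

/-- For `K = Sym(M)`, the maximum of `P_π` over maximal keys equals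
`1 - min_{i ≠ j} (P i + P j)`. -/
theorem max_Pfix_symmetric_group {M : Type*} [Fintype M] [DecidableEq M]
    (hN : 2 ≤ Fintype.card M) (P : M → ℝ)
    (hP : ∀ x, 0 ≤ P x) (hsum : ∑ x, P x = 1) :
    ∃ c : ℝ, IsLeast {y : ℝ | ∃ i j : M, i ≠ j ∧ P i + P j = y} c ∧
      IsGreatest {x : ℝ | ∃ π : Equiv.Perm M,
        IsMaximalKey (⊤ : Subgroup (Equiv.Perm M)) π ∧ Pfix P π = x} (1 - c) := by
  have : Nontrivial M := Fintype.one_lt_card_iff_nontrivial.mp hN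
  exact hsum ▸ max_Pfix_symmetric_group_general P
end
end

section
/- (Transposition cipher, maximal keys.) Let M be a finite set with |M| ≥ 2, d ≥ 2, Δ = {1,…,d}, and let K = {T_π : π ∈ Sym(Δ)} be the subgroup of Sym(M^d) of position permutations, where T_π(m_1…m_d) = m_{π(1)}…m_{π(d)}. Then the maximal keys of K are exactly the maps T_π with π a transposition of Δ; consequently |K| = d!, and |K_max| = d(d−1)/2. -/
open scoped Classical

noncomputable section

/-- The group homomorphism sending a permutation of positions to the induced permutation of
words: `(posHom M d π) m = m ∘ π.symm`; in particular `posHom M d τ⁻¹` is the map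
`T_τ : (m_1 … m_d) ↦ (m_{τ(1)} … m_{τ(d)})`, and the range of `posHom M d` is exactly the
group `{T_π : π ∈ Sym({1,…,d})}` of position permutations. -/
def posHom (M : Type*) (d : ℕ) : Equiv.Perm (Fin d) →* Equiv.Perm (Fin d → M) where
  toFun π := Equiv.arrowCongr π (Equiv.refl M)
  map_one' := by ext f i; rfl
  map_mul' := fun π ρ => by ext f i; simp [Equiv.Perm.mul_def]

/-!
A word is fixed by the position permutation of `π` iff it is constant on the cycles of `π`. Over an
alphabet with two distinct letters the indicator words of cycles tell the partitions into cycles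
apart, so `F(T_σ) ⊆ F(T_π)` iff every cycle of `π` lies in a cycle of `σ`. Maximal fixed sets thus
belong to the finest nontrivial cycle partitions, those with a single block of size two and
singletons otherwise, and these come from transpositions.
-/

open Equiv Equiv.Perm Finset

section Permutations

variable {α : Type*}

lemma eq_of_comp_eq_of_sameCycle {β : Type*} {σ : Perm α} {f : α → β} (hf : f ∘ σ = f)
    {i j : α} (hij : σ.SameCycle i j) : f i = f j := by
  obtain ⟨n, rfl⟩ := hij
  have hf_apply (k : α) : f (σ k) = f k := congrFun hf k
  induction n with
  | zero => rfl
  | succ n ih => rw [add_comm, zpow_one_add, Perm.mul_apply, hf_apply, ih]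
  | pred n ih =>
    rw [← hf_apply ((σ ^ (-(n : ℤ) - 1)) i), ← Perm.mul_apply, ← zpow_one_add, add_sub_cancel, ih]

lemma forall_comp_eq_imp_comp_eq_iff {β : Type*} [Nontrivial β] {σ π : Perm α} :
    (∀ f : α → β, f ∘ σ = f → f ∘ π = f) ↔ ∀ i, σ.SameCycle i (π i) := by
  constructor
  · intro h i
    obtain ⟨x, y, hxy⟩ := exists_pair_ne β
    let cycleIndicator : α → β := fun j ↦ if σ.SameCycle i j then x else y
    have hσ : cycleIndicator ∘ σ = cycleIndicator := by
      funext j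
      simp only [cycleIndicator, Function.comp_apply, sameCycle_apply_right]
    have hπ : cycleIndicator (π i) = cycleIndicator i := congrFun (h _ hσ) i
    by_contra hi
    simp only [cycleIndicator, if_neg hi, if_pos (SameCycle.refl σ i)] at hπ
    exact hxy hπ.symm
  · intro h f hf
    exact funext fun i ↦ (eq_of_comp_eq_of_sameCycle hf (h i)).symm

lemma sameCycle_swap_apply [DecidableEq α] (σ : Perm α) (a i : α) :
    σ.SameCycle i (swap a (σ a) i) := by
  rw [swap_apply_def]
  split_ifs with hia hib
  · simp [hia, SameCycle.rfl]
  · simp [hib, SameCycle.rfl]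
  · rfl

variable [Fintype α] [DecidableEq α]

lemma support_subset_of_forall_sameCycle {σ τ : Perm α} (h : ∀ i, σ.SameCycle i (τ i)) :
    τ.support ⊆ σ.support := fun i hi ↦ by
  rw [mem_support] at hi ⊢
  exact fun hσ ↦ hi ((h i).eq_of_left hσ).symm

lemma support_injOn_isSwap : Set.InjOn support {σ : Perm α | σ.IsSwap} := by
  rintro _ ⟨a, b, hab, rfl⟩ _ ⟨c, d, hcd, rfl⟩ h
  rw [support_swap hab, support_swap hcd, ← coe_inj, coe_pair, coe_pair,
    Set.pair_eq_pair_iff] at h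
  obtain ⟨rfl, rfl⟩ | ⟨rfl, rfl⟩ := h
  · rfl
  · exact swap_comm a b

lemma eq_of_support_subset_of_isSwap {σ τ : Perm α} (hσ : σ ≠ 1) (hτ : τ.IsSwap)
    (h : σ.support ⊆ τ.support) : σ = τ := by
  have hsupport : σ.support = τ.support :=
    eq_of_subset_of_card_le h <|
      (card_support_eq_two.2 hτ).trans_le (two_le_card_support_of_ne_one hσ)
  have hσ_swap : σ.IsSwap := by
    rw [← card_support_eq_two, hsupport, card_support_eq_two]
    exact hτ
  exact support_injOn_isSwap hσ_swap hτ hsupport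

lemma image_support_isSwap :
    support '' {σ : Perm α | σ.IsSwap} = (powersetCard 2 univ : Finset (Finset α)) := by
  ext s
  simp only [Set.mem_image, Set.mem_ofPred_eq, mem_coe, mem_powersetCard_univ]
  constructor
  · rintro ⟨σ, hσ, rfl⟩
    exact card_support_eq_two.2 hσ
  · intro hs
    obtain ⟨a, b, hab, rfl⟩ := card_eq_two.1 hs
    exact ⟨swap a b, ⟨a, b, hab, rfl⟩, support_swap hab⟩

lemma card_isSwap :
    Nat.card {σ : Perm α | σ.IsSwap} = (Fintype.card α).choose 2 := by
  rw [← Nat.card_image_of_injOn support_injOn_isSwap, image_support_isSwap]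
  simp

end Permutations

section PositionPermutations

variable {M : Type*} {d : ℕ}

lemma posHom_apply (π : Perm (Fin d)) (m : Fin d → M) (i : Fin d) :
    posHom M d π m i = m (π⁻¹ i) := rfl

lemma posHom_apply_of_isSwap {τ : Perm (Fin d)} (hτ : τ.IsSwap) (m : Fin d → M) (i : Fin d) :
    posHom M d τ m i = m (τ i) := by
  obtain ⟨a, b, -, rfl⟩ := hτ
  rw [posHom_apply, swap_inv]

lemma posHom_apply_eq_self_iff {π : Perm (Fin d)} {m : Fin d → M} :
    posHom M d π m = m ↔ m ∘ π = m :=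
  (π.comp_symm_eq m m).trans eq_comm

variable [Nontrivial M]

lemma posHom_injective : Function.Injective (posHom M d) := by
  rw [injective_iff_map_eq_one]
  intro π hπ
  have hcycle : ∀ i, (1 : Perm (Fin d)).SameCycle i (π i) :=
    forall_comp_eq_imp_comp_eq_iff.1 fun (m : Fin d → M) _ ↦
      posHom_apply_eq_self_iff.1 (by rw [hπ, Perm.one_apply])
  exact Perm.ext fun i ↦ (sameCycle_one.1 (hcycle i)).symm

variable [Fintype M] [DecidableEq M]

lemma fixedSet_posHom_subset_iff {σ π : Perm (Fin d)} :
    fixedSet (posHom M d σ) ⊆ fixedSet (posHom M d π) ↔ ∀ i, σ.SameCycle i (π i) := by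
  rw [← forall_comp_eq_imp_comp_eq_iff (β := M)]
  simp only [subset_iff, fixedSet, mem_filter_univ, posHom_apply_eq_self_iff]

lemma isMaximalKey_posHom_iff {π : Perm (Fin d)} :
    IsMaximalKey (posHom M d).range (posHom M d π) ↔ π.IsSwap := by
  have posHom_ne_one {ρ : Perm (Fin d)} : posHom M d ρ ≠ 1 ↔ ρ ≠ 1 :=
    map_ne_one_iff _ posHom_injective
  constructor
  · rintro ⟨-, hπ, hmax⟩
    obtain ⟨a, ha⟩ : ∃ a, π a ≠ a := by
      simpa [Perm.ext_iff] using posHom_ne_one.1 hπ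
    have hswap : (swap a (π a)).IsSwap := ⟨a, π a, ha.symm, rfl⟩
    have hfixed := hmax (posHom M d (swap a (π a))) ⟨_, rfl⟩
      (posHom_ne_one.2 hswap.isCycle.ne_one)
      (fixedSet_posHom_subset_iff.2 (sameCycle_swap_apply π a))
    have hsupport : π.support ⊆ (swap a (π a)).support :=
      support_subset_of_forall_sameCycle (fixedSet_posHom_subset_iff.1 hfixed.subset)
    rwa [eq_of_support_subset_of_isSwap (posHom_ne_one.1 hπ) hswap hsupport]
  · intro hπ
    refine ⟨⟨π, rfl⟩, posHom_ne_one.2 hπ.isCycle.ne_one, ?_⟩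
    rintro _ ⟨ρ, rfl⟩ hρ hfixed
    have hsupport : ρ.support ⊆ π.support :=
      support_subset_of_forall_sameCycle (fixedSet_posHom_subset_iff.1 hfixed)
    rw [eq_of_support_subset_of_isSwap (posHom_ne_one.1 hρ) hπ hsupport]

lemma setOf_isMaximalKey_range_posHom :
    {σ | IsMaximalKey (posHom M d).range σ} = posHom M d '' {τ | τ.IsSwap} := by
  ext σ
  constructor
  · intro hσ
    obtain ⟨τ, rfl⟩ := hσ.1
    exact ⟨τ, isMaximalKey_posHom_iff.1 hσ, rfl⟩
  · rintro ⟨τ, hτ, rfl⟩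
    exact isMaximalKey_posHom_iff.2 hτ

lemma isMaximalKey_range_posHom_iff {σ : Perm (Fin d → M)} :
    IsMaximalKey (posHom M d).range σ ↔
      ∃ τ : Perm (Fin d), τ.IsSwap ∧ ∀ m i, σ m i = m (τ i) := by
  rw [← Set.mem_ofPred_eq (p := IsMaximalKey _), setOf_isMaximalKey_range_posHom]
  refine exists_congr fun τ ↦ and_congr_right fun hτ ↦ ?_
  simp only [Perm.ext_iff, funext_iff, posHom_apply_of_isSwap hτ, eq_comm]

end PositionPermutations

/-- Transposition cipher, maximal keys: the maximal keys of
`K = {T_π : π ∈ Sym({1,…,d})}` are exactly the `T_τ` with `τ` a transposition of positions;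
moreover `|K| = d!` and `|K_max| = d(d-1)/2`. -/
theorem maximal_keys_of_position_permutations {M : Type*} [Fintype M] [DecidableEq M]
    (hM : 2 ≤ Fintype.card M) {d : ℕ} (hd : 2 ≤ d) :
    (∀ σ : Equiv.Perm (Fin d → M), IsMaximalKey (posHom M d).range σ ↔
      ∃ τ : Equiv.Perm (Fin d), τ.IsSwap ∧ ∀ (m : Fin d → M) (i : Fin d), σ m i = m (τ i)) ∧
    Nat.card (posHom M d).range = Nat.factorial d ∧
    Nat.card {σ : Equiv.Perm (Fin d → M) // IsMaximalKey (posHom M d).range σ} =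
      d * (d - 1) / 2 := by
  have : Nontrivial M := Fintype.one_lt_card_iff_nontrivial.1 hM
  refine ⟨fun σ ↦ isMaximalKey_range_posHom_iff, ?_, ?_⟩
  · calc Nat.card (posHom M d).range
      _ = Nat.card (Perm (Fin d)) := Nat.card_range_of_injective posHom_injective
      _ = d.factorial := by rw [Nat.card_perm, Nat.card_fin]
  · calc Nat.card {σ | IsMaximalKey (posHom M d).range σ}
      _ = Nat.card (posHom M d '' {τ | τ.IsSwap}) := by rw [setOf_isMaximalKey_range_posHom]
      _ = Nat.card {τ : Perm (Fin d) | τ.IsSwap} :=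
        Nat.card_image_of_injective posHom_injective _
      _ = d * (d - 1) / 2 := by rw [card_isSwap, Fintype.card_fin, Nat.choose_two_right]
end
end
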